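/- The piecewise-defined function u₁ of the vector advection test case is a weak solution of the transport equation ∇·(V u₁) = u₀² on (0,1)² with V = (1,−1) and u₀ the indicator of {x ≤ −0.4y² + 0.4y + 0.375}: for every smooth function φ : ℝ² → ℝ with compact support contained in (0,1)², −∫_{(0,1)²} u₁(x,y)·(∂φ/∂x(x,y) − ∂φ/∂y(x,y)) dx dy = ∫_{(0,1)² ∩ {x ≤ −0.4y² + 0.4y + 0.375}} φ(x,y) dx dy. -/

import Mathlib

open MeasureTheory

/-- `ỹ(x,y) = (1.4 - √(1.96 + 1.6(0.375 - x - y)))/0.8`. -/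
noncomputable def ytil (x y : ℝ) : ℝ :=
  (1.4 - Real.sqrt (1.96 + 1.6 * (0.375 - x - y))) / 0.8

/-- `x̃(x,y) = -0.4 ỹ² + 0.4 ỹ + 0.375`. -/
noncomputable def xtil (x y : ℝ) : ℝ :=
  -0.4 * (ytil x y) ^ 2 + 0.4 * ytil x y + 0.375

/-- The shock curve `c(y) = -0.4 y² + 0.4 y + 0.375`. -/
def shockCurve (y : ℝ) : ℝ := -0.4 * y ^ 2 + 0.4 * y + 0.375

/-- The exact solution `u₁` of the vector advection test case, defined piecewise:
`u₁ = 1.3 - y` if `y > 1 - x` and `x ≤ c(y)`; `u₁ = 0.3 + x` if `y ≤ 1 - x` and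
`x ≤ c(y)`; `u₁ = 0.3 + x̃` if `y ≤ 1 - x` and `x > c(y)`; `u₁ = 1.3 - ỹ` if `x > c(y)`
and `1 - x < y < 1.375 - x`; `u₁ = 0.3` if `y ≥ 1.375 - x`. -/
noncomputable def uOne (x y : ℝ) : ℝ :=
  if 1.375 - x ≤ y then 0.3
  else if x ≤ shockCurve y then (if 1 - x < y then 1.3 - y else 0.3 + x)
  else (if y ≤ 1 - x then 0.3 + xtil x y else 1.3 - ytil x y)

/-- Integration by parts against a ramp `a + min t b` whose slope is the indicator of `t ≤ b`. -/
lemma integral_ramp_mul_deriv (f : ℝ → ℝ) (hf : ContDiff ℝ 1 f) (hc : HasCompactSupport f)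
    (a b : ℝ) :
    ∫ t, (a + min t b) * deriv f t = -∫ t in Set.Iic b, f t := by
  have hd : Continuous (deriv f) := hf.continuous_deriv le_rfl
  have hint : Integrable f := hf.continuous.integrable_of_hasCompactSupport hc
  have hI : ∀ g : ℝ → ℝ, Continuous g → Integrable (fun t => g t * deriv f t) := fun g hg =>
    (hg.mul hd).integrable_of_hasCompactSupport hc.deriv.mul_left
  have hmul : ∀ t, deriv (fun t => (a + t) * f t) t = f t + (a + t) * deriv f t := by
    intro t
    simpa using (((hasDerivAt_id t).const_add a).fun_mul
      (hf.differentiable one_ne_zero t).hasDerivAt).deriv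
  have hleft : ∫ t in Set.Iic b, deriv (fun t => (a + t) * f t) t = (a + b) * f b :=
    HasCompactSupport.integral_Iic_deriv_eq (f := fun t => (a + t) * f t) (by fun_prop)
      hc.mul_left b
  have hright : ∫ t in Set.Ioi b, deriv f t = -f b :=
    HasCompactSupport.integral_Ioi_deriv_eq hf hc b
  simp only [hmul] at hleft
  rw [integral_add hint.integrableOn (hI _ (by fun_prop)).integrableOn] at hleft
  rw [← intervalIntegral.integral_Iic_add_Ioi (b := b) (hI _ (by fun_prop)).integrableOn
    (hI _ (by fun_prop)).integrableOn]
  have h₁ : ∫ t in Set.Iic b, (a + min t b) * deriv f t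
      = ∫ t in Set.Iic b, (a + t) * deriv f t :=
    setIntegral_congr_fun measurableSet_Iic fun t ht => by
      simp only [min_eq_left (Set.mem_Iic.1 ht)]
  have h₂ : ∫ t in Set.Ioi b, (a + min t b) * deriv f t
      = ∫ t in Set.Ioi b, (a + b) * deriv f t :=
    setIntegral_congr_fun measurableSet_Ioi fun t ht => by
      simp only [min_eq_right (Set.mem_Ioi.1 ht).le]
  rw [h₁, h₂, integral_const_mul, hright]
  linarith

lemma measurable_ytil : Measurable fun p : ℝ × ℝ => ytil p.1 p.2 := by
  unfold ytil
  fun_prop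

lemma measurable_xtil : Measurable fun p : ℝ × ℝ => xtil p.1 p.2 := by
  have := measurable_ytil
  unfold xtil
  fun_prop

lemma measurableSet_le_shockCurve : MeasurableSet {p : ℝ × ℝ | p.1 ≤ shockCurve p.2} := by
  unfold shockCurve
  exact measurableSet_le (by fun_prop) (by fun_prop)

lemma measurable_uOne : Measurable fun p : ℝ × ℝ => uOne p.1 p.2 := by
  have := measurable_ytil
  have := measurable_xtil
  unfold uOne
  refine Measurable.ite (measurableSet_le (by fun_prop) (by fun_prop)) (by fun_prop) ?_
  refine Measurable.ite measurableSet_le_shockCurve ?_ ?_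
  · exact Measurable.ite (measurableSet_lt (by fun_prop) (by fun_prop)) (by fun_prop)
      (by fun_prop)
  · exact Measurable.ite (measurableSet_le (by fun_prop) (by fun_prop)) (by fun_prop)
      (by fun_prop)

lemma ytil_mem_Icc {x y : ℝ} (h : 0 ≤ x + y) : ytil x y ∈ Set.Icc (-0.25) 1.75 := by
  have h₀ := Real.sqrt_nonneg (1.96 + 1.6 * (0.375 - x - y))
  have h₁ : √(1.96 + 1.6 * (0.375 - x - y)) ≤ 1.6 :=
    Real.sqrt_le_iff.2 ⟨by norm_num, by norm_num; linarith⟩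
  constructor <;> unfold ytil
  · rw [le_div_iff₀ (by norm_num)]; linarith
  · rw [div_le_iff₀ (by norm_num)]; linarith

/-- `(x̃, ỹ)` lies on the characteristic through `(x, y)`. -/
lemma xtil_add_ytil {x y : ℝ} (h : x + y ≤ 1.6) : xtil x y + ytil x y = x + y := by
  have h₀ := Real.sq_sqrt (x := 1.96 + 1.6 * (0.375 - x - y)) (by linarith)
  unfold xtil ytil
  linear_combination (-0.625) * h₀

lemma abs_uOne_le {x y : ℝ} (hx : x ∈ Set.Ioo (0 : ℝ) 1) (hy : y ∈ Set.Ioo (0 : ℝ) 1) :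
    |uOne x y| ≤ 5 := by
  obtain ⟨hx₀, hx₁⟩ := hx
  obtain ⟨hy₀, hy₁⟩ := hy
  obtain ⟨h₀, h₁⟩ := ytil_mem_Icc (x := x) (y := y) (by linarith)
  unfold uOne
  split_ifs with h
  · norm_num [abs_le]
  · rw [abs_le]; constructor <;> linarith
  · rw [abs_le]; constructor <;> linarith
  · have := xtil_add_ytil (x := x) (y := y) (by linarith)
    rw [abs_le]; constructor <;> linarith
  · rw [abs_le]; constructor <;> linarith

/-- On the unit square, before the last characteristic meeting the shock, `x ≤ c(y)` says that
the point precedes the foot `x̃` on its characteristic. -/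
lemma le_shockCurve_iff {x y : ℝ} (hy : y < 1) (h : x + y < 1.375) :
    x ≤ shockCurve y ↔ x ≤ xtil x y := by
  have hs := xtil_add_ytil (x := x) (y := y) (by linarith)
  have hlt : ytil x y < 1 := by
    unfold ytil
    rw [div_lt_iff₀ (by norm_num)]
    have : (0.6 : ℝ) < √(1.96 + 1.6 * (0.375 - x - y)) :=
      Real.lt_sqrt_of_sq_lt (by norm_num; linarith)
    linarith
  have key : shockCurve y - x = (y - ytil x y) * (1.4 - 0.4 * (y + ytil x y)) := by
    have : xtil x y = -0.4 * (ytil x y) ^ 2 + 0.4 * ytil x y + 0.375 := rfl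
    unfold shockCurve
    linear_combination hs - this
  have hpos : 0 < 1.4 - 0.4 * (y + ytil x y) := by linarith
  rw [← sub_nonneg, key, mul_nonneg_iff_of_pos_right hpos]
  constructor <;> intro <;> linarith

lemma shockCurve_lt {x y : ℝ} (hy : y < 1) (h : 1.375 ≤ x + y) : shockCurve y < x := by
  unfold shockCurve
  nlinarith [mul_pos (sub_pos.2 hy) (sub_pos.2 hy)]

/-- Along a characteristic `u₁` is a ramp that stops growing at the shock. -/
lemma uOne_eq_ramp {x y : ℝ} (hy : y < 1) (h : x + y < 1.375) :
    uOne x y = (if x + y ≤ 1 then 0.3 else 1.3 - (x + y)) + min x (xtil x y) := by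
  have hs := xtil_add_ytil (x := x) (y := y) (by linarith)
  have hiff := le_shockCurve_iff hy h
  unfold uOne
  rw [if_neg (by linarith)]
  by_cases hx : x ≤ shockCurve y
  · rw [if_pos hx, min_eq_left (hiff.1 hx)]
    split_ifs <;> linarith
  · rw [if_neg hx, min_eq_right (not_le.1 (mt hiff.2 hx)).le]
    split_ifs <;> linarith

lemma xtil_eq_of_add_eq {x y x' y' : ℝ} (h : x + y = x' + y') : xtil x y = xtil x' y' := by
  have : (0.375 : ℝ) - x - y = 0.375 - x' - y' := by linarith
  simp only [xtil, ytil, this]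

/-- The weak formulation along a single characteristic `x + y = s`. -/
lemma integral_uOne_characteristic (f : ℝ → ℝ) (hf : ContDiff ℝ 1 f) (hc : HasCompactSupport f)
    (s : ℝ) (hlt : ∀ t ∈ tsupport f, -t + s < 1) :
    -∫ t, uOne t (-t + s) * deriv f t =
      ∫ t, {t | t ≤ shockCurve (-t + s)}.indicator f t := by
  have hd : ∀ t ∉ tsupport f, deriv f t = 0 := fun t ht =>
    image_eq_zero_of_notMem_tsupport (mt (fun h => tsupport_deriv_subset h) ht)
  rcases lt_or_ge s 1.375 with hs | hs
  · have hx : ∀ t, xtil t (-t + s) = xtil 0 s := fun t => xtil_eq_of_add_eq (by ring)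
    have h₁ : ∀ t, uOne t (-t + s) * deriv f t =
        ((if s ≤ 1 then 0.3 else 1.3 - s) + min t (xtil 0 s)) * deriv f t := by
      intro t
      by_cases ht : t ∈ tsupport f
      · rw [uOne_eq_ramp (hlt t ht) (by linarith), hx, add_neg_cancel_left]
      · simp [hd t ht]
    have h₂ : {t | t ≤ shockCurve (-t + s)}.indicator f = (Set.Iic (xtil 0 s)).indicator f := by
      ext t
      by_cases ht : t ∈ tsupport f
      · have := le_shockCurve_iff (x := t) (hlt t ht) (by linarith)
        rw [hx] at this
        simp only [Set.indicator_apply, Set.mem_ofPred_eq, this, Set.mem_Iic]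
      · simp [Set.indicator_apply, image_eq_zero_of_notMem_tsupport ht]
    simp only [h₁, h₂]
    rw [integral_ramp_mul_deriv f hf hc, neg_neg, integral_indicator measurableSet_Iic]
  · have h₁ : ∀ t, uOne t (-t + s) * deriv f t = 0.3 * deriv f t := fun t => by
      rw [uOne, if_pos (by linarith)]
    have h₂ : {t | t ≤ shockCurve (-t + s)}.indicator f = 0 := by
      ext t
      by_cases ht : t ∈ tsupport f
      · have := shockCurve_lt (x := t) (hlt t ht) (by linarith)
        simp [this]
      · simp [Set.indicator_apply, image_eq_zero_of_notMem_tsupport ht]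
    have h₃ : ∫ t, deriv f t = 0 :=
      integral_eq_zero_of_hasDerivAt_of_integrable
        (fun t => (hf.differentiable one_ne_zero t).hasDerivAt)
        ((hf.continuous_deriv le_rfl).integrable_of_hasCompactSupport hc.deriv)
        (hf.continuous.integrable_of_hasCompactSupport hc)
    simp only [h₁, h₂, integral_const_mul, h₃]
    simp

/-- The piecewise-defined `u₁` is a weak solution of the transport equation
`∇·(V u₁) = u₀²` on `(0,1)²` with `V = (1,-1)` and `u₀` the indicator of
`{x ≤ -0.4 y² + 0.4 y + 0.375}`: for every smooth `φ` with compact support contained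
in `(0,1)²`,
`-∫_{(0,1)²} u₁ (∂φ/∂x - ∂φ/∂y) = ∫_{(0,1)² ∩ {x ≤ c(y)}} φ`. -/
theorem uOne_weak_solution
    (φ : ℝ × ℝ → ℝ) (hφ : ContDiff ℝ (⊤ : ℕ∞) φ) (hcpt : HasCompactSupport φ)
    (hsupp : tsupport φ ⊆ Set.Ioo (0:ℝ) 1 ×ˢ Set.Ioo (0:ℝ) 1) :
    -∫ p in Set.Ioo (0:ℝ) 1 ×ˢ Set.Ioo (0:ℝ) 1,
        uOne p.1 p.2 * (fderiv ℝ φ p (1, 0) - fderiv ℝ φ p (0, 1)) =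
      ∫ p in (Set.Ioo (0:ℝ) 1 ×ˢ Set.Ioo (0:ℝ) 1) ∩ {p : ℝ × ℝ | p.1 ≤ shockCurve p.2},
        φ p := by
  set S : Set (ℝ × ℝ) := Set.Ioo (0:ℝ) 1 ×ˢ Set.Ioo (0:ℝ) 1
  set A : Set (ℝ × ℝ) := {p : ℝ × ℝ | p.1 ≤ shockCurve p.2}
  have hSm : MeasurableSet S := measurableSet_Ioo.prod measurableSet_Ioo
  have hdiff : ∀ p, fderiv ℝ φ p (1, 0) - fderiv ℝ φ p (0, 1) = fderiv ℝ φ p (1, -1) := by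
    intro p
    rw [← map_sub]
    simp
  simp only [hdiff]
  have hφ0 : ∀ p ∉ S, φ p = 0 := fun p hp =>
    image_eq_zero_of_notMem_tsupport (mt (fun h => hsupp h) hp)
  have hD0 : ∀ p ∉ S, fderiv ℝ φ p (1, -1) = 0 := fun p hp => by
    rw [image_eq_zero_of_notMem_tsupport (f := fderiv ℝ φ)
      (mt (fun h => hsupp (tsupport_fderiv_subset ℝ h)) hp)]
    rfl
  have hDcont : Continuous fun p => fderiv ℝ φ p (1, -1) :=
    (hφ.continuous_fderiv (by simp)).clm_apply continuous_const
  have hDint : Integrable fun p => fderiv ℝ φ p (1, -1) :=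
    hDcont.integrable_of_hasCompactSupport (hcpt.fderiv_apply ℝ _)
  have hL : Integrable fun p : ℝ × ℝ => uOne p.1 p.2 * fderiv ℝ φ p (1, -1) := by
    have h := hDint.bdd_mul (f := S.indicator fun p => uOne p.1 p.2) (c := 5)
      (measurable_uOne.indicator hSm).aestronglyMeasurable
      (Filter.Eventually.of_forall fun p => by
        by_cases hp : p ∈ S
        · simpa [hp] using abs_uOne_le hp.1 hp.2
        · simp [hp])
    refine h.congr (Filter.Eventually.of_forall fun p => ?_)
    by_cases hp : p ∈ S
    · simp [hp]
    · simp [hD0 p hp]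
  have hR : Integrable (A.indicator φ) :=
    (hφ.continuous.integrable_of_hasCompactSupport hcpt).indicator measurableSet_le_shockCurve
  rw [setIntegral_eq_integral_of_forall_compl_eq_zero fun p hp => by simp [hD0 p hp],
    ← setIntegral_indicator measurableSet_le_shockCurve,
    setIntegral_eq_integral_of_forall_compl_eq_zero fun p hp => by
      simp [Set.indicator_apply, hφ0 p hp]]
  have hmp : MeasurePreserving (fun z : ℝ × ℝ => (z.2, -z.2 + z.1)) volume volume :=
    measurePreserving_prod_neg_add_swap volume volume
  have hchange : ∀ g : ℝ × ℝ → ℝ, Integrable g → ∫ p, g p = ∫ s, ∫ t, g (t, -t + s) := by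
    intro g hg
    have hg' : Integrable (fun z : ℝ × ℝ => g (z.2, -z.2 + z.1)) :=
      hmp.integrable_comp_of_integrable hg
    rw [← integral_prod (fun z : ℝ × ℝ => g (z.2, -z.2 + z.1)) hg']
    conv_lhs => rw [← hmp.map_eq]
    exact integral_map hmp.aemeasurable (hmp.map_eq.symm ▸ hg.aestronglyMeasurable)
  rw [hchange _ hL, hchange _ hR, ← integral_neg]
  congr 1
  ext s
  have hline : ∀ t, HasDerivAt (fun t : ℝ => (t, -t + s)) ((1 : ℝ), (-1 : ℝ)) t := fun t =>
    (hasDerivAt_id t).prodMk ((hasDerivAt_neg t).add_const s)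
  have hderiv : ∀ t, deriv (fun t => φ (t, -t + s)) t = fderiv ℝ φ (t, -t + s) (1, -1) :=
    fun t => ((hφ.differentiable (by simp) (t, -t + s)).hasFDerivAt.comp_hasDerivAt t
      (hline t)).deriv
  have hemb : Topology.IsClosedEmbedding fun t : ℝ => (t, -t + s) :=
    Function.LeftInverse.isClosedEmbedding (f := Prod.fst) (fun _ => rfl) continuous_fst
      (by fun_prop)
  have := integral_uOne_characteristic (fun t => φ (t, -t + s))
    ((hφ.of_le (by simp)).comp (by fun_prop)) (hcpt.comp_isClosedEmbedding hemb) s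
    (fun t ht => (hsupp (tsupport_comp_subset_preimage φ hemb.continuous ht)).2.2)
  simp only [hderiv] at this
  exact this
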